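/- Let m > n ≥ 1 and let A₁, A₂ be n×m integer matrices such that A₁−A₂ has rank n over ℚ. Then MC(f_{A₁}, f_{A₂}) = ∞: for every pair of continuous maps f₁' homotopic to f_{A₁} and f₂' homotopic to f_{A₂}, the coincidence set {x ∈ Tᵐ : f₁'(x) = f₂'(x)} is infinite. -/

import Mathlib

/-- The `k`-torus `(ℝ/ℤ)ᵏ`. -/
abbrev Torus (k : ℕ) : Type := Fin k → AddCircle (1 : ℝ)

/-- The continuous homomorphism `Tᵐ → Tⁿ` induced by an `n × m` integer matrix. -/
noncomputable def torusHom {m n : ℕ} (A : Matrix (Fin n) (Fin m) ℤ) :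
    C(Torus m, Torus n) :=
  ⟨fun x j => ∑ i, A j i • x i, by
    refine continuous_pi fun j => ?_
    exact continuous_finset_sum _ fun i _ => (continuous_apply i).zsmul (A j i)⟩

/-!
If `g` is `C¹` with compact support, then for small `t` the map `y ↦ y + t • g y` is a
diffeomorphism which preserves every large ball `K`, so
`∫_K (c - ‖y + t • g y‖²) ^ N * det (1 + t • Dg y) = ∫_K (c - ‖y‖²) ^ N`. The left-hand side is a
polynomial in `t`, hence the identity persists at `t = 1`. If `y + g y` never vanished, then for
large `c` and `N → ∞` the left-hand side would grow at a strictly smaller exponential rate than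
the right-hand side. So `y + g y = 0` is solvable, and by approximation and truncation so is
`y + ψ y = z` for every bounded continuous `ψ`.

The difference of the two maps lifts to `x ↦ A x + φ x` on `ℝᵐ`, with `A = A₁ - A₂` and `φ`
continuous and bounded. When `S` is a right inverse of `A` and `v ≠ 0` lies in its kernel,
substituting `x = s • v + S y` turns `A x + φ x = 0` into `y + φ (s • v + S y) = 0`. Solving this
for each `s : ℝ` gives uncountably many zeros in `ℝᵐ`, and the fibres of `ℝᵐ → Tᵐ` are countable.
-/

open Filter Function MeasureTheory Metric Polynomial Set Topology

section PolynomialIntegrals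

variable {α : Type*} [MeasurableSpace α] {μ : Measure α} {F : ℝ → α → ℝ} {d : ℕ}

lemma exists_polynomial_eval_eq_integral
    (hF : ∀ x, ∃ p : ℝ[X], p.natDegree ≤ d ∧ ∀ t, p.eval t = F t x)
    (hFint : ∀ t, Integrable (F t) μ) :
    ∃ P : ℝ[X], ∀ t, P.eval t = ∫ x, F t x ∂μ := by
  let node : ℕ → ℝ := (↑)
  let basis : ℕ → ℝ[X] := Lagrange.basis (Finset.range (d + 1)) node
  have hinterp (t : ℝ) (x : α) :
      F t x = ∑ i ∈ Finset.range (d + 1), F i x * (basis i).eval t := by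
    obtain ⟨p, hpd, hp⟩ := hF x
    have hdeg : p.degree < (Finset.range (d + 1)).card := by
      rw [Finset.card_range]
      exact degree_le_natDegree.trans_lt (by exact_mod_cast Nat.lt_succ_of_le hpd)
    rw [← hp t, Lagrange.eq_interpolate (v := node) Nat.cast_injective.injOn hdeg,
      Lagrange.interpolate_apply, eval_finsetSum]
    simp only [eval_mul, eval_C, hp, node, basis]
  refine ⟨∑ i ∈ Finset.range (d + 1), C (∫ x, F i x ∂μ) * basis i, fun t => ?_⟩
  simp only [hinterp t, eval_finsetSum, eval_mul, eval_C]
  rw [integral_finsetSum _ fun i _ => (hFint (i : ℕ)).mul_const ((basis i).eval t)]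
  simp only [integral_mul_const]

lemma integral_eq_of_eventually_integral_eq {c : ℝ}
    (hF : ∀ x, ∃ p : ℝ[X], p.natDegree ≤ d ∧ ∀ t, p.eval t = F t x)
    (hFint : ∀ t, Integrable (F t) μ) (hc : ∀ᶠ t in 𝓝 0, ∫ x, F t x ∂μ = c) (t : ℝ) :
    ∫ x, F t x ∂μ = c := by
  obtain ⟨P, hP⟩ := exists_polynomial_eval_eq_integral hF hFint
  have hPc : P = C c := by
    refine eq_of_infinite_eval_eq _ _ (infinite_of_mem_nhds 0 ?_)
    filter_upwards [hc] with s hs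
    exact (hP s).trans (hs.trans eval_C.symm)
  rw [← hP, hPc, eval_C]

end PolynomialIntegrals

lemma exists_polynomial_eval_eq_det_one_add_smul {R M : Type*} [CommRing R] [Nontrivial R]
    [AddCommGroup M] [Module R M] [Module.Free R M] [Module.Finite R M] (L : M →ₗ[R] M) :
    ∃ p : R[X], p.natDegree ≤ Module.finrank R M ∧ ∀ t, p.eval t = (1 + t • L).det := by
  let b := Module.finBasis R M
  let A := LinearMap.toMatrix b b L
  refine ⟨((X : R[X]) • A.map C + (1 : Matrix _ _ R).map C).det, ?_, fun t => ?_⟩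
  · simpa only [Fintype.card_fin] using natDegree_det_X_add_C_le A 1
  · rw [← LinearMap.det_toMatrix b, ← coe_evalRingHom, RingHom.map_det]
    congr 1
    ext i j
    change eval t (X * C (A i j) + C ((1 : Matrix _ _ R) i j)) = _
    simp only [eval_add, eval_mul, eval_X, eval_C, map_add, map_smul, LinearMap.toMatrix_one,
      Matrix.add_apply, Matrix.smul_apply, smul_eq_mul, A]
    exact add_comm _ _

lemma exists_polynomial_eval_eq_const_sub_norm_sq {E : Type*} [NormedAddCommGroup E]
    [InnerProductSpace ℝ E] (c : ℝ) (x v : E) :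
    ∃ p : ℝ[X], p.natDegree ≤ 2 ∧ ∀ t, p.eval t = c - ‖x + t • v‖ ^ 2 := by
  refine ⟨C (c - ‖x‖ ^ 2) - C (2 * inner ℝ x v) * X - C (‖v‖ ^ 2) * X ^ 2,
    by compute_degree, fun t => ?_⟩
  rw [norm_add_sq_real, inner_smul_right, norm_smul, mul_pow, Real.norm_eq_abs, sq_abs]
  simp only [eval_sub, eval_mul, eval_C, eval_X, eval_pow]
  ring

lemma ae_le_of_forall_integral_pow_le {α : Type*} [MeasurableSpace α] {μ : Measure α}
    {v : α → ℝ} {a B : ℝ} (ha : 0 ≤ a) (hv : 0 ≤ᵐ[μ] v)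
    (hvint : ∀ N : ℕ, Integrable (fun x => v x ^ N) μ)
    (hle : ∀ N : ℕ, ∫ x, v x ^ N ∂μ ≤ a ^ N * B) : ∀ᵐ x ∂μ, v x ≤ a := by
  refine (ae_le_const_iff_forall_gt_measure_zero _ _).2 fun b hab => ?_
  have hb : 0 < b := ha.trans_lt hab
  have hfin : μ {x | b ≤ v x} < ⊤ := by
    simpa only [pow_one] using (hvint 1).measure_ge_lt_top hb
  have hmarkov (N : ℕ) : b ^ N * μ.real {x | b ≤ v x} ≤ ∫ x, v x ^ N ∂μ := by
    have hvN : 0 ≤ᵐ[μ] fun x => v x ^ N := hv.mono fun x hx => pow_nonneg hx N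
    have hsub : {x | b ≤ v x} ⊆ {x | b ^ N ≤ v x ^ N} := fun x hx =>
      pow_le_pow_left₀ hb.le hx N
    exact (mul_le_mul_of_nonneg_left
      (measureReal_mono hsub ((hvint N).measure_ge_lt_top (pow_pos hb N)).ne)
      (pow_nonneg hb.le N)).trans (mul_meas_ge_le_integral_of_nonneg hvN (hvint N) (b ^ N))
  have hgeom (N : ℕ) : μ.real {x | b ≤ v x} ≤ (a / b) ^ N * B := by
    rw [div_pow, div_mul_eq_mul_div, le_div_iff₀' (pow_pos hb N)]
    exact (hmarkov N).trans (hle N)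
  have hlim : Tendsto (fun N : ℕ => (a / b) ^ N * B) atTop (𝓝 0) := by
    simpa only [zero_mul] using (tendsto_pow_atTop_nhds_zero_of_lt_one
      (div_nonneg ha hb.le) ((div_lt_one hb).2 hab)).mul_const B
  exact (measureReal_eq_zero_iff hfin.ne).1
    (le_antisymm (ge_of_tendsto' hlim hgeom) measureReal_nonneg)

lemma ae_le_of_forall_integral_pow_eq {α : Type*} [MeasurableSpace α] {μ : Measure α}
    {u v w : α → ℝ} {a : ℝ} (hw : Integrable w μ) (hu : ∀ᵐ x ∂μ, |u x| ≤ a) (hv : 0 ≤ᵐ[μ] v)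
    (hvint : ∀ N : ℕ, Integrable (fun x => v x ^ N) μ)
    (hmom : ∀ N : ℕ, ∫ x, u x ^ N * w x ∂μ = ∫ x, v x ^ N ∂μ) :
    ∀ᵐ x ∂μ, v x ≤ a := by
  rcases eq_or_ne μ 0 with rfl | hμ
  · simp
  have : (ae μ).NeBot := ae_neBot.2 hμ
  have ha : 0 ≤ a := let ⟨_, hx⟩ := hu.exists; (abs_nonneg _).trans hx
  refine ae_le_of_forall_integral_pow_le (B := ∫ x, |w x| ∂μ) ha hv hvint fun N => ?_
  rw [← hmom, ← integral_const_mul]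
  refine (Real.le_norm_self _).trans (norm_integral_le_of_norm_le (hw.abs.const_mul _) ?_)
  filter_upwards [hu] with x hx
  rw [norm_mul, norm_pow, Real.norm_eq_abs, Real.norm_eq_abs]
  gcongr

lemma image_eq_self_of_eqOn_compl_id {α : Type*} {f : α → α} {s : Set α} (hf : Bijective f)
    (hs : EqOn f id sᶜ) : f '' s = s := by
  have hcompl : BijOn f sᶜ sᶜ := hs.bijOn_iff.2 (bijOn_id _)
  simpa only [compl_compl] using (hcompl.compl hf).image_eq

lemma bijective_id_add_of_lipschitzWith {E : Type*} [NormedAddCommGroup E] [CompleteSpace E]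
    {k : E → E} {c : NNReal} (hc : c < 1) (hk : LipschitzWith c k) :
    Bijective fun x => x + k x := by
  refine ⟨?_, fun z => ?_⟩
  · exact (AntilipschitzWith.id.add_lipschitzWith hk (by simpa using hc)).injective
  · have hcontr : ContractingWith c fun y => z - k y :=
      ⟨hc, by simpa using (LipschitzWith.const z).sub hk⟩
    have hfix : z - k hcontr.fixedPoint = hcontr.fixedPoint := hcontr.fixedPoint_isFixedPt
    exact ⟨hcontr.fixedPoint, (sub_eq_iff_eq_add.1 hfix).symm⟩

section CompactlySupportedPerturbation

variable {E : Type*} [NormedAddCommGroup E] [NormedSpace ℝ E] {g : E → E}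

lemma hasFDerivAt_id_add_smul {y : E} (hg : DifferentiableAt ℝ g y) (t : ℝ) :
    HasFDerivAt (fun z => z + t • g z) (1 + t • fderiv ℝ g y) y :=
  (hasFDerivAt_id y).add (hg.hasFDerivAt.const_smul t)

lemma continuous_det_one_add_smul_fderiv (hg : ContDiff ℝ 1 g) :
    Continuous fun z : ℝ × E => (1 + z.1 • fderiv ℝ g z.2).det :=
  have := hg.continuous_fderiv one_ne_zero
  ContinuousLinearMap.continuous_det.comp (by fun_prop)

lemma eventually_det_one_add_smul_fderiv_pos {K : Set E} (hg : ContDiff ℝ 1 g) (hK : IsCompact K) :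
    ∀ᶠ t : ℝ in 𝓝 0, ∀ y ∈ K, 0 < (1 + t • fderiv ℝ g y).det := by
  refine hK.eventually_forall_of_forall_eventually fun y _ => ?_
  refine (continuous_det_one_add_smul_fderiv hg).continuousAt.eventually_const_lt ?_
  simp [ContinuousLinearMap.det]

variable [FiniteDimensional ℝ E]

lemma eventually_bijective_id_add_smul (hg : ContDiff ℝ 1 g) (hgc : HasCompactSupport g) :
    ∀ᶠ t : ℝ in 𝓝 0, Bijective fun y => y + t • g y := by
  obtain ⟨C, hC⟩ := hg.lipschitzWith_of_hasCompactSupport hgc one_ne_zero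
  have hsmall : ∀ᶠ t : ℝ in 𝓝 0, ‖t‖₊ * C < 1 := by
    have hcont : Continuous fun t : ℝ => ‖t‖₊ * C := by fun_prop
    exact hcont.continuousAt.eventually_lt_const (by simp)
  have := FiniteDimensional.complete ℝ E
  filter_upwards [hsmall] with t ht
  exact bijective_id_add_of_lipschitzWith ht ((lipschitzWith_smul t).comp hC)

variable [MeasurableSpace E] [BorelSpace E] (μ : Measure E) [μ.IsAddHaarMeasure]

lemma eventually_integral_comp_mul_det_eq {K : Set E} (hg : ContDiff ℝ 1 g) (hK : IsCompact K)
    (hgK : support g ⊆ K) (h : E → ℝ) :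
    ∀ᶠ t : ℝ in 𝓝 0,
      ∫ y in K, h (y + t • g y) * (1 + t • fderiv ℝ g y).det ∂μ = ∫ y in K, h y ∂μ := by
  filter_upwards [eventually_det_one_add_smul_fderiv_pos hg hK,
    eventually_bijective_id_add_smul hg (.intro hK (support_subset_iff'.1 hgK))] with t hpos hbij
  have himage : (fun y => y + t • g y) '' K = K := by
    refine image_eq_self_of_eqOn_compl_id hbij fun y hy => ?_
    simp only [notMem_support.1 (notMem_subset hgK hy), smul_zero, add_zero, id]
  have hderiv (y : E) (_ : y ∈ K) := (hasFDerivAt_id_add_smul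
    (hg.differentiable one_ne_zero y) t).hasFDerivWithinAt (s := K)
  have hcov := integral_image_eq_integral_abs_det_fderiv_smul μ hK.measurableSet hderiv
    hbij.injective.injOn h
  rw [← himage, hcov, himage]
  refine setIntegral_congr_fun hK.measurableSet fun y hy => ?_
  simp only [abs_of_pos (hpos y hy), smul_eq_mul, mul_comm]

end CompactlySupportedPerturbation

section InnerProductSpace

variable {E : Type*} [NormedAddCommGroup E] [InnerProductSpace ℝ E] [FiniteDimensional ℝ E]

lemma integral_const_sub_norm_sq_pow_mul_det_eq [MeasurableSpace E] [BorelSpace E]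
    (μ : Measure E) [μ.IsAddHaarMeasure] {g : E → E} {K : Set E} (hg : ContDiff ℝ 1 g)
    (hK : IsCompact K) (hgK : support g ⊆ K) (c : ℝ) (N : ℕ) :
    ∫ y in K, (c - ‖y + g y‖ ^ 2) ^ N * (1 + fderiv ℝ g y).det ∂μ =
      ∫ y in K, (c - ‖y‖ ^ 2) ^ N ∂μ := by
  have hcont (t : ℝ) : Continuous fun y =>
      (c - ‖y + t • g y‖ ^ 2) ^ N * (1 + t • fderiv ℝ g y).det := by
    have := hg.continuous
    have := (continuous_det_one_add_smul_fderiv hg).comp (Continuous.prodMk_right t)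
    fun_prop
  have hpoly (y : E) : ∃ p : ℝ[X], p.natDegree ≤ N * 2 + Module.finrank ℝ E ∧
      ∀ t, p.eval t = (c - ‖y + t • g y‖ ^ 2) ^ N * (1 + t • fderiv ℝ g y).det := by
    obtain ⟨p, hpdeg, hp⟩ := exists_polynomial_eval_eq_const_sub_norm_sq c y (g y)
    obtain ⟨q, hqdeg, hq⟩ :=
      exists_polynomial_eval_eq_det_one_add_smul (fderiv ℝ g y : E →ₗ[ℝ] E)
    refine ⟨p ^ N * q, natDegree_mul_le_of_le (natDegree_pow_le_of_le N hpdeg) hqdeg, fun t => ?_⟩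
    rw [eval_mul, eval_pow, hp, hq]
    rfl
  simpa only [one_smul] using integral_eq_of_eventually_integral_eq hpoly
    (fun t => (hcont t).continuousOn.integrableOn_compact hK)
    (eventually_integral_comp_mul_det_eq μ hg hK hgK fun y => (c - ‖y‖ ^ 2) ^ N) 1

lemma ae_restrict_le_norm_of_forall_le_norm_add [MeasurableSpace E] [BorelSpace E]
    (μ : Measure E) [μ.IsAddHaarMeasure] {g : E → E} {K : Set E} {ε : ℝ} (hg : ContDiff ℝ 1 g)
    (hK : IsCompact K) (hgK : support g ⊆ K) (hε : 0 ≤ ε) (hlow : ∀ y ∈ K, ε ≤ ‖y + g y‖) :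
    ∀ᵐ y ∂μ.restrict K, ε ≤ ‖y‖ := by
  have hcont : Continuous fun y => y + g y := continuous_id.add hg.continuous
  obtain ⟨c₁, hc₁⟩ := hK.bddAbove_image (continuous_norm.pow 2).continuousOn
  obtain ⟨c₂, hc₂⟩ := hK.bddAbove_image (hcont.norm.pow 2).continuousOn
  let c := max c₁ c₂
  have hle_id (y : E) (hy : y ∈ K) : ‖y‖ ^ 2 ≤ c :=
    (hc₁ (mem_image_of_mem _ hy)).trans (le_max_left _ _)
  have hle_add (y : E) (hy : y ∈ K) : ‖y + g y‖ ^ 2 ≤ c :=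
    (hc₂ (mem_image_of_mem _ hy)).trans (le_max_right _ _)
  have hdet : Continuous fun y => (1 + fderiv ℝ g y).det := by
    simpa only [Function.comp_def, one_smul] using
      (continuous_det_one_add_smul_fderiv hg).comp (Continuous.prodMk_right 1)
  have hae : ∀ᵐ y ∂μ.restrict K, c - ‖y‖ ^ 2 ≤ c - ε ^ 2 := by
    refine ae_le_of_forall_integral_pow_eq (hdet.continuousOn.integrableOn_compact hK)
      (ae_restrict_of_forall_mem hK.measurableSet fun y hy => ?_)
      (ae_restrict_of_forall_mem hK.measurableSet fun y hy => sub_nonneg.2 (hle_id y hy))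
      (fun N => (by fun_prop : Continuous _).continuousOn.integrableOn_compact hK)
      (integral_const_sub_norm_sq_pow_mul_det_eq μ hg hK hgK c)
    rw [abs_of_nonneg (sub_nonneg.2 (hle_add y hy))]
    exact sub_le_sub_left (pow_le_pow_left₀ hε (hlow y hy) 2) c
  filter_upwards [hae] with y hy
  exact (sq_le_sq₀ hε (norm_nonneg y)).1 ((sub_le_sub_iff_left c).1 hy)

lemma exists_add_eq_zero_of_contDiff {g : E → E} (hg : ContDiff ℝ 1 g)
    (hgc : HasCompactSupport g) : ∃ y, y + g y = 0 := by
  by_contra! hne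
  borelize E
  obtain ⟨R, hR, hgR⟩ := hgc.isCompact.isBounded.subset_closedBall_lt 0 0
  have hK : IsCompact (closedBall (0 : E) R) := isCompact_closedBall 0 R
  obtain ⟨ε, hε, hlow⟩ := hK.exists_forall_le' (continuous_id.add hg.continuous).norm.continuousOn
    fun y _ => norm_pos_iff.2 (hne y)
  have hae := ae_restrict_le_norm_of_forall_le_norm_add volume hg hK
    ((subset_tsupport g).trans hgR) hε.le hlow
  have hnull : volume (ball (0 : E) (min R ε)) = 0 := by
    refine measure_mono_null (fun y hy => ?_)
      (ae_iff.1 ((ae_restrict_iff' hK.measurableSet).1 hae))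
    obtain ⟨hyR, hyε⟩ := lt_min_iff.1 (mem_ball_zero_iff.1 hy)
    exact fun hle => (hle (mem_closedBall_zero_iff.2 hyR.le)).not_gt hyε
  exact (measure_ball_pos volume 0 (lt_min hR hε)).ne' hnull

lemma exists_add_eq_zero_of_hasCompactSupport {ψ : E → E} (hψ : Continuous ψ)
    (hψc : HasCompactSupport ψ) : ∃ y, y + ψ y = 0 := by
  by_contra! hne
  obtain ⟨g, hg, hdist, hsupp⟩ := hψ.exists_contDiff_approx 1
    (continuous_id.add hψ).norm fun y => norm_pos_iff.2 (hne y)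
  obtain ⟨y, hy⟩ := exists_add_eq_zero_of_contDiff hg (hψc.mono hsupp)
  refine (hdist y).ne ?_
  rw [dist_eq_norm, eq_neg_of_add_eq_zero_right hy, ← neg_add', norm_neg]
  rfl

lemma exists_add_eq_zero_of_isBounded_range_of_inner {ψ : E → E} (hψ : Continuous ψ)
    (hb : Bornology.IsBounded (range ψ)) : ∃ y, y + ψ y = 0 := by
  obtain ⟨M, hM, hψM⟩ := hb.subset_closedBall_lt 0 0
  have hnorm (y : E) : ‖ψ y‖ ≤ M := mem_closedBall_zero_iff.1 (hψM (mem_range_self y))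
  let χ : ContDiffBump (0 : E) := ⟨M, M + 1, hM, lt_add_one M⟩
  obtain ⟨y, hy⟩ := exists_add_eq_zero_of_hasCompactSupport (ψ := fun y => χ y • ψ y)
    (χ.continuous.smul hψ) χ.hasCompactSupport.smul_right
  refine ⟨y, ?_⟩
  have hyM : ‖y‖ ≤ M := by
    rw [eq_neg_of_add_eq_zero_left hy, norm_neg, norm_smul, Real.norm_of_nonneg χ.nonneg]
    exact (mul_le_of_le_one_left (norm_nonneg _) χ.le_one).trans (hnorm y)
  have hχ : χ y = 1 := χ.one_of_mem_closedBall (mem_closedBall_zero_iff.2 hyM)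
  simpa only [hχ, one_smul] using hy

end InnerProductSpace

section BoundedPerturbation

variable {E : Type*} [NormedAddCommGroup E] [NormedSpace ℝ E] [FiniteDimensional ℝ E]

lemma surjective_id_add_of_isBounded_range {ψ : E → E} (hψ : Continuous ψ)
    (hb : Bornology.IsBounded (range ψ)) : Surjective fun y => y + ψ y := by
  intro z
  let e := toEuclidean (E := E)
  let φ : E → E := fun y => ψ y - z
  have hφb : Bornology.IsBounded (range φ) :=
    (hb.sub Bornology.isBounded_singleton).subset <|
      range_subset_iff.2 fun y => sub_mem_sub (mem_range_self y) (mem_singleton z)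
  have hconjb : Bornology.IsBounded (range (e ∘ φ ∘ e.symm)) := by
    refine (e.lipschitz.isBounded_image hφb).subset ?_
    rw [← range_comp]
    exact range_comp_subset_range e.symm (e ∘ φ)
  obtain ⟨y, hy⟩ := exists_add_eq_zero_of_isBounded_range_of_inner (e.continuous.comp
    ((hψ.sub continuous_const).comp e.symm.continuous)) hconjb
  have hsum : e.symm y + (ψ (e.symm y) - z) = 0 := by
    simpa only [Function.comp_apply, Pi.sub_apply, map_add, map_zero, e.symm_apply_apply]
      using congrArg e.symm hy
  exact ⟨e.symm y, sub_eq_zero.1 ((add_sub_assoc _ _ _).trans hsum)⟩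

lemma not_countable_setOf_add_eq_zero {V : Type*} [AddCommGroup V] [Module ℝ V]
    [TopologicalSpace V] [IsTopologicalAddGroup V] [ContinuousSMul ℝ V] {L : V →L[ℝ] E}
    (hL : Surjective L) (hker : L.ker ≠ ⊥) {φ : V → E} (hφ : Continuous φ)
    (hb : Bornology.IsBounded (range φ)) : ¬ {x | L x + φ x = 0}.Countable := by
  obtain ⟨S, hS⟩ := L.exists_rightInverse_of_surjective (LinearMap.range_eq_top.2 hL)
  have hLS (y : E) : L (S y) = y := DFunLike.congr_fun hS y
  obtain ⟨v, hv, hv0⟩ := (Submodule.ne_bot_iff _).1 hker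
  have hLv : L v = 0 := hv
  have hzero (s : ℝ) : ∃ y, y + φ (s • v + S y) = 0 :=
    surjective_id_add_of_isBounded_range (hφ.comp (by fun_prop))
      (hb.subset (range_comp_subset_range _ φ)) 0
  choose y hy using hzero
  let x : ℝ → V := fun s => s • v + S (y s)
  have hLx (s : ℝ) : L (x s) = y s := by simp [x, hLS, hLv]
  have hx : Injective x := fun s t hst => by
    have hyst : y s = y t := by rw [← hLx, hst, hLx]
    refine smul_left_injective ℝ hv0 ?_
    simpa only [x, hyst, add_left_inj] using hst
  have hmem (s : ℝ) : L (x s) + φ (x s) = 0 := by rw [hLx]; exact hy s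
  exact fun hcount => Cardinal.not_countable_real
    ((hcount.preimage hx).mono fun s _ => hmem s)

end BoundedPerturbation

lemma homotopic_sub {X Y : Type*} [TopologicalSpace X] [TopologicalSpace Y] [Sub Y]
    [ContinuousSub Y] {f₀ f₁ g₀ g₁ : C(X, Y)} (hf : f₀.Homotopic f₁) (hg : g₀.Homotopic g₁) :
    (f₀ - g₀).Homotopic (f₁ - g₁) :=
  (ContinuousMap.Homotopic.refl ⟨fun z : Y × Y => z.1 - z.2, continuous_sub⟩).comp (hf.prodMk hg)

lemma exists_eq_add_coe_of_homotopic {X : Type*} [TopologicalSpace X] {p : ℝ}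
    {f₀ f₁ : C(X, AddCircle p)} (h : f₀.Homotopic f₁) :
    ∃ φ : C(X, ℝ), ∀ x, f₁ x = f₀ x + φ x := by
  obtain ⟨H⟩ := h
  let D : C(unitInterval × X, AddCircle p) := ⟨fun z => H z - f₀ z.2, by fun_prop⟩
  have hD (x : X) : D (0, x) = ((0 : C(X, ℝ)) x : AddCircle p) := by simp [D]
  let lift := (AddCircle.isCoveringMap_coe p).liftHomotopy D 0 hD
  have hlift (x : X) : ((lift (1, x) : ℝ) : AddCircle p) = f₁ x - f₀ x := by
    rw [← H.apply_one x]
    exact congrFun ((AddCircle.isCoveringMap_coe p).liftHomotopy_lifts D 0 hD) (1, x)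
  exact ⟨lift.comp (.prodMk (.const X 1) (.id X)), fun x => (add_eq_of_eq_sub' (hlift x)).symm⟩

lemma exists_eq_add_coe_of_homotopic_pi {X ι : Type*} [TopologicalSpace X] {p : ℝ}
    {f₀ f₁ : C(X, ι → AddCircle p)} (h : f₀.Homotopic f₁) :
    ∃ φ : C(X, ι → ℝ), ∀ x j, f₁ x j = f₀ x j + φ x j := by
  have hlift (j : ι) : ∃ φ : C(X, ℝ), ∀ x, f₁ x j = f₀ x j + φ x :=
    exists_eq_add_coe_of_homotopic
      ((ContinuousMap.Homotopic.refl ⟨fun z : ι → AddCircle p => z j, continuous_apply j⟩).comp h)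
  choose φ hφ using hlift
  exact ⟨.pi φ, fun x j => hφ j x⟩

lemma countable_preimage_coe_addCircle (p : ℝ) (z : AddCircle p) :
    ((↑) ⁻¹' {z} : Set ℝ).Countable := by
  obtain ⟨t, rfl⟩ := QuotientAddGroup.mk_surjective z
  refine (countable_range fun k : ℤ => t + k • p).mono fun s hs => ?_
  obtain ⟨k, hk⟩ := (AddCircle.coe_eq_zero_iff p).1 (show ((s - t : ℝ) : AddCircle p) = 0 from
    sub_eq_zero.2 hs)
  exact ⟨k, add_eq_of_eq_sub' hk⟩

lemma surjective_mulVec_of_rank_eq_card {K m n : Type*} [Field K] [Fintype m] [Fintype n]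
    {A : Matrix n m K} (hA : A.rank = Fintype.card n) : Surjective A.mulVec := by
  have htop : A.mulVecLin.range = ⊤ :=
    Submodule.eq_top_of_finrank_eq (hA.trans (Module.finrank_fintype_fun_eq_card K).symm)
  exact LinearMap.range_eq_top.1 htop

lemma surjective_mulVec_map {R S m n : Type*} [CommSemiring R] [CommSemiring S] [Fintype m]
    [Finite n] {A : Matrix n m R} (hA : Surjective A.mulVec) (f : R →+* S) :
    Surjective (A.map f).mulVec := by
  classical
  have := Fintype.ofFinite n
  obtain ⟨B, hB⟩ := Matrix.mulVec_surjective_iff_exists_right_inverse.1 hA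
  refine Matrix.mulVec_surjective_iff_exists_right_inverse.2 ⟨B.map f, ?_⟩
  rw [← Matrix.map_mul, hB, Matrix.map_one f (map_zero f) (map_one f)]

/-- The universal covering `ℝᵏ → Tᵏ`, reducing every coordinate modulo `1`. -/
def torusProj (k : ℕ) : C(Fin k → ℝ, Torus k) :=
  ⟨fun x i => x i, continuous_pi fun i => (AddCircle.continuous_mk' 1).comp (continuous_apply i)⟩

lemma countable_preimage_torusProj {k : ℕ} {s : Set (Torus k)} (hs : s.Countable) :
    (torusProj k ⁻¹' s).Countable := by
  rw [← biUnion_preimage_singleton]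
  refine hs.biUnion fun z _ => ?_
  refine (countable_univ_pi fun i => countable_preimage_coe_addCircle 1 (z i)).mono ?_
  exact fun x hx i _ => congrFun hx i

lemma torusHom_sub {m n : ℕ} (A₁ A₂ : Matrix (Fin n) (Fin m) ℤ) :
    torusHom (A₁ - A₂) = torusHom A₁ - torusHom A₂ := by
  ext x j
  simp [torusHom, sub_smul, Finset.sum_sub_distrib]

lemma torusHom_torusProj {m n : ℕ} (A : Matrix (Fin n) (Fin m) ℤ) (x : Fin m → ℝ) :
    torusHom A (torusProj m x) = torusProj n ((A.map (Int.cast : ℤ → ℝ)).mulVec x) := by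
  ext j
  simp [torusHom, torusProj, Matrix.mulVec, dotProduct]

lemma not_countable_setOf_eq_zero_of_homotopic_torusHom {m n : ℕ} (hnm : n < m)
    {A : Matrix (Fin n) (Fin m) ℤ} (hA : Surjective (A.map (Int.cast : ℤ → ℝ)).mulVec)
    {f : C(Torus m, Torus n)} (hf : (torusHom A).Homotopic f) :
    ¬ {x | f x = 0}.Countable := by
  obtain ⟨φ, hφ⟩ := exists_eq_add_coe_of_homotopic_pi hf
  let L : (Fin m → ℝ) →L[ℝ] (Fin n → ℝ) :=
    (A.map (Int.cast : ℤ → ℝ)).mulVecLin.toContinuousLinearMap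
  have hker : L.ker ≠ ⊥ := LinearMap.ker_ne_bot_of_finrank_lt (by simpa using hnm)
  have hbdd : Bornology.IsBounded (range (φ ∘ torusProj m)) :=
    (isCompact_range φ.continuous).isBounded.subset (range_comp_subset_range _ _)
  have hlift (x : Fin m → ℝ) : f (torusProj m x) = torusProj n (L x + φ (torusProj m x)) := by
    ext j
    rw [hφ, torusHom_torusProj]
    rfl
  refine fun hcount => not_countable_setOf_add_eq_zero (L := L) hA hker
    (φ.continuous.comp (torusProj m).continuous) hbdd
    ((countable_preimage_torusProj hcount).mono fun x hx => ?_)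
  have hx : L x + φ (torusProj m x) = 0 := hx
  change f (torusProj m x) = 0
  rw [hlift, hx]
  rfl

theorem stmt8 (m n : ℕ) (hmn : n < m) (hn : 1 ≤ n)
    (A₁ A₂ : Matrix (Fin n) (Fin m) ℤ)
    (hrank : ((A₁ - A₂).map (Int.cast : ℤ → ℚ)).rank = n) :
    ∀ f₁' f₂' : C(Torus m, Torus n),
      (torusHom A₁).Homotopic f₁' → (torusHom A₂).Homotopic f₂' →
      Infinite {x : Torus m // f₁' x = f₂' x} := by
  intro f₁' f₂' h₁ h₂
  have hsurj : Surjective ((A₁ - A₂).map (Int.cast : ℤ → ℝ)).mulVec := by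
    have hℚ := surjective_mulVec_of_rank_eq_card (hrank.trans (Fintype.card_fin n).symm)
    simpa [Matrix.map_map, Function.comp_def] using surjective_mulVec_map hℚ (Rat.castHom ℝ)
  have hhom : (torusHom (A₁ - A₂)).Homotopic (f₁' - f₂') :=
    torusHom_sub A₁ A₂ ▸ homotopic_sub h₁ h₂
  have hzeros : {x | (f₁' - f₂') x = 0}.Infinite := fun hfin =>
    not_countable_setOf_eq_zero_of_homotopic_torusHom hmn hsurj hhom hfin.countable
  have heq : {x | (f₁' - f₂') x = 0} = {x | f₁' x = f₂' x} := by
    ext x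
    exact sub_eq_zero
  exact (heq ▸ hzeros).to_subtype
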